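/- Let n ≥ 3, δ := e^{−3}, and define f(x) := χ_{B_β(0,δ)}(x) / ( |x|_β² · |log |x|_β|⁶ ), where χ_{B_β(0,δ)} is the characteristic function of the β-ball B_β(0,δ). Then there exists a constant C = C(n,β) > 0 such that for every x ∈ ℝⁿ and every r > 0, ∫_{{y : |x−y|_β < r}} f(y) / |x−y|_β^{n−2} dy ≤ C · ( −log min(r,δ) )^{−5}. In particular, η_β(r) := sup_{x∈ℝⁿ} ∫_{{y : |x−y|_β < r}} f(y) / |x−y|_β^{n−2} dy tends to 0 as r → 0⁺. -/

import Mathlib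

open MeasureTheory Real Set Filter Topology

/-- The non-isotropic β-distance of `x` to the origin:
`|x|_β = (∑ k, |x k| ^ (1/β k)) ^ ((β₁+⋯+βₙ)/n)`. -/
noncomputable def betaDist (n : ℕ) (β : Fin n → ℝ) (x : Fin n → ℝ) : ℝ :=
  (∑ k, |x k| ^ (1 / β k)) ^ ((∑ k, β k) / n)

/-- The example function `f(x) = χ_{B_β(0,e⁻³)}(x) / (|x|_β² |log |x|_β|⁶)`. -/
noncomputable def fex (n : ℕ) (β : Fin n → ℝ) (x : Fin n → ℝ) : ℝ :=
  Set.indicator {z : Fin n → ℝ | betaDist n β z < Real.exp (-3)}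
    (fun z => 1 / (betaDist n β z ^ (2:ℝ) * |Real.log (betaDist n β z)| ^ (6:ℝ))) x

/-- The Stummel modulus (with `p = 2`-type kernel `|x-y|_β^{n-2}`) of `fex`:
`η_β(r) = sup_x ∫_{|x-y|_β<r} fex(y)/|x-y|_β^{n-2} dy`. -/
noncomputable def etaEx (n : ℕ) (β : Fin n → ℝ) (r : ℝ) : ℝ :=
  ⨆ x : Fin n → ℝ, ∫ y in {y : Fin n → ℝ | betaDist n β (x - y) < r},
    fex n β y / betaDist n β (x - y) ^ ((n:ℝ) - 2)

lemma aux_vol (n : ℕ) (hn : 3 ≤ n) (β : Fin n → ℝ) (hβ : ∀ k, (1:ℝ)/2 ≤ β k) (s : ℝ) (hs : 0 < s) :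
    volume {z : Fin n → ℝ | betaDist n β z ≤ s} ≤ ENNReal.ofReal (2 ^ n * s ^ n) := by
  have hn0 : (0:ℝ) < n := by positivity
  have hβ0 : ∀ k, 0 < β k := fun k => by linarith [hβ k]
  have hB : 0 < ∑ k, β k := by
    apply Finset.sum_pos (fun k _ => hβ0 k)
    exact ⟨⟨0, by omega⟩, Finset.mem_univ _⟩
  set B := ∑ k, β k with hBdef
  set R : Fin n → ℝ := fun k => s ^ (n / B * β k) with hR
  have hsub : {z : Fin n → ℝ | betaDist n β z ≤ s} ⊆ Icc (fun k => - R k) R := by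
    intro z hz
    have hz' : betaDist n β z ≤ s := hz
    unfold betaDist at hz'
    rw [← hBdef] at hz'
    have hS0 : 0 ≤ ∑ k, |z k| ^ (1 / β k) := Finset.sum_nonneg (fun k _ => by positivity)
    have h1 : ∑ k, |z k| ^ (1 / β k) ≤ s ^ (n / B) := by
      have := Real.rpow_le_rpow (by positivity) hz' (show 0 ≤ n / B by positivity)
      rwa [← Real.rpow_mul hS0, show B / n * (n / B) = 1 by field_simp, Real.rpow_one] at this
    have h2 : ∀ k, |z k| ≤ R k := by
      intro k
      have h3 : |z k| ^ (1 / β k) ≤ s ^ (n / B) :=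
        (Finset.single_le_sum (f := fun k => |z k| ^ (1 / β k)) (fun k _ => by positivity)
          (Finset.mem_univ k)).trans h1
      have := Real.rpow_le_rpow (by positivity) h3 (hβ0 k).le
      rwa [← Real.rpow_mul (abs_nonneg _), one_div_mul_cancel (hβ0 k).ne', Real.rpow_one,
        ← Real.rpow_mul hs.le] at this
    exact ⟨fun k => (abs_le.mp (h2 k)).1, fun k => (abs_le.mp (h2 k)).2⟩
  refine (measure_mono hsub).trans ?_
  rw [Real.volume_Icc_pi, ← ENNReal.ofReal_prod_of_nonneg]
  · apply ENNReal.ofReal_le_ofReal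
    apply le_of_eq
    have : ∀ k, R k - - R k = 2 * R k := fun k => by ring
    simp only [this]
    rw [Finset.prod_mul_distrib, Finset.prod_const, Finset.card_univ, Fintype.card_fin]
    congr 1
    rw [← Real.rpow_sum_of_pos hs, ← Finset.mul_sum, ← hBdef, div_mul_cancel₀ _ hB.ne',
      Real.rpow_natCast]
  · intro k _
    have : 0 ≤ R k := by positivity
    linarith

lemma aux_sum (l : ℝ) (hl : 1 ≤ l) (N : ℕ) :
    ∑ j ∈ Finset.range N, 1 / (l + j) ^ 6 ≤ 2 * (1 / l ^ 5 - 1 / (l + N) ^ 5) := by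
  induction N with
  | zero => simp
  | succ N ih =>
    rw [Finset.sum_range_succ]
    have key : ∀ a : ℝ, 1 ≤ a → 1 / a ^ 6 ≤ 2 * (1 / a ^ 5 - 1 / (a + 1) ^ 5) := by
      intro a ha
      obtain ⟨b, hb, rfl⟩ : ∃ b, 0 ≤ b ∧ a = 1 + b := ⟨a - 1, by linarith, by ring⟩
      have : 2 * (1 / (1 + b) ^ 5 - 1 / (1 + b + 1) ^ 5) - 1 / (1 + b) ^ 6 =
          (2 * (1 + b) * ((1 + b + 1) ^ 5 - (1 + b) ^ 5) - (1 + b + 1) ^ 5) /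
            ((1 + b) ^ 6 * (1 + b + 1) ^ 5) := by
        field_simp
      have h2 : 0 ≤ 2 * (1 + b) * ((1 + b + 1) ^ 5 - (1 + b) ^ 5) - (1 + b + 1) ^ 5 := by
        ring_nf
        positivity
      have h3 := div_nonneg h2 (show 0 ≤ (1 + b) ^ 6 * (1 + b + 1) ^ 5 by positivity)
      linarith
    have h := key (l + N) (by have : (0:ℝ) ≤ N := by positivity
                              linarith)
    push_cast
    rw [← add_assoc]
    linarith

lemma aux_mono (u t : ℝ) (hu : 0 < u) (hut : u ≤ t) (ht : t < Real.exp (-3)) :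
    u ^ 2 * (-Real.log u) ^ 6 ≤ t ^ 2 * (-Real.log t) ^ 6 := by
  have ht0 : 0 < t := hu.trans_le hut
  obtain ⟨a, rfl⟩ : ∃ a, u = Real.exp (-a) := ⟨-Real.log u, by simp [Real.exp_log hu]⟩
  obtain ⟨b, rfl⟩ : ∃ b, t = Real.exp (-b) := ⟨-Real.log t, by simp [Real.exp_log ht0]⟩
  rw [Real.exp_le_exp] at hut
  rw [Real.exp_lt_exp] at ht
  simp only [Real.log_exp, neg_neg]
  have e : ∀ c : ℝ, Real.exp (-c) ^ 2 * c ^ 6 = (c * Real.exp (-c / 3)) ^ 6 := by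
    intro c
    rw [mul_pow, ← Real.exp_nat_mul, ← Real.exp_nat_mul, mul_comm]
    congr 2
    push_cast
    ring
  rw [e, e]
  apply pow_le_pow_left₀
  · have : 0 ≤ a := by linarith
    positivity
  have h1 := Real.add_one_le_exp ((a - b) / 3)
  have h2 : a ≤ b * Real.exp ((a - b) / 3) := by nlinarith
  have h3 : Real.exp (-b / 3) = Real.exp ((a - b) / 3) * Real.exp (-a / 3) := by
    rw [← Real.exp_add]; congr 1; ring
  rw [h3, ← mul_assoc]
  exact mul_le_mul_of_nonneg_right h2 (Real.exp_pos _).le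

noncomputable def HH (n : ℕ) (β : Fin n → ℝ) (l : ℝ) (z : Fin n → ℝ) : ENNReal :=
  ∑' j : ℕ, Set.indicator {z : Fin n → ℝ | betaDist n β z ≤ Real.exp (-(l + j))}
    (fun _ => ENNReal.ofReal (1 / (Real.exp (-(l + j + 1)) ^ n * (l + j) ^ 6))) z

lemma aux_meas (n : ℕ) (β : Fin n → ℝ) : Measurable (betaDist n β) := by
  unfold betaDist
  fun_prop

lemma aux_HHmeas (n : ℕ) (β : Fin n → ℝ) (l : ℝ) : Measurable (HH n β l) := by
  unfold HH
  apply Measurable.tsum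
  intro j
  exact measurable_const.indicator (measurableSet_le (aux_meas n β) measurable_const)

lemma aux_HHbound (n : ℕ) (hn : 3 ≤ n) (β : Fin n → ℝ) (hβ : ∀ k, (1:ℝ)/2 ≤ β k) (l : ℝ)
    (hl : 1 ≤ l) :
    ∫⁻ z, HH n β l z ≤ ENNReal.ofReal (2 ^ n * Real.exp n * (2 * (1 / l ^ 5))) := by
  unfold HH
  rw [lintegral_tsum]
  swap
  · intro j
    exact (measurable_const.indicator
      (measurableSet_le (aux_meas n β) measurable_const)).aemeasurable
  have hterm : ∀ j : ℕ, ∫⁻ z, Set.indicator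
      {z : Fin n → ℝ | betaDist n β z ≤ Real.exp (-(l + j))}
      (fun _ => ENNReal.ofReal (1 / (Real.exp (-(l + j + 1)) ^ n * (l + j) ^ 6))) z ≤
      ENNReal.ofReal (2 ^ n * Real.exp n * (1 / (l + j) ^ 6)) := by
    intro j
    rw [lintegral_indicator_const (measurableSet_le (aux_meas n β) measurable_const)]
    have hj : 0 < l + j := by positivity
    refine (mul_le_mul_right (aux_vol n hn β hβ _ (Real.exp_pos _)) _).trans ?_
    rw [← ENNReal.ofReal_mul (by positivity)]
    apply ENNReal.ofReal_le_ofReal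
    apply le_of_eq
    have : Real.exp (-(l + j)) ^ n = Real.exp n * Real.exp (-(l + j + 1)) ^ n := by
      rw [← Real.exp_nat_mul, ← Real.exp_nat_mul, ← Real.exp_add]
      congr 1
      ring
    rw [this]
    field_simp
  refine (ENNReal.tsum_le_tsum hterm).trans ?_
  apply ENNReal.tsum_le_of_sum_range_le
  intro N
  rw [← ENNReal.ofReal_sum_of_nonneg (fun j _ => by positivity), ← Finset.mul_sum]
  apply ENNReal.ofReal_le_ofReal
  apply mul_le_mul_of_nonneg_left _ (by positivity)
  refine (aux_sum l hl N).trans ?_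
  have : 0 ≤ 1 / (l + N) ^ 5 := by positivity
  linarith

lemma aux_HHlb (n : ℕ) (β : Fin n → ℝ) (l : ℝ) (hl : 1 ≤ l) (z : Fin n → ℝ)
    (h0 : 0 < betaDist n β z) (h1 : betaDist n β z ≤ Real.exp (-l)) :
    ENNReal.ofReal (1 / (betaDist n β z ^ n * (-Real.log (betaDist n β z)) ^ 6)) ≤ HH n β l z := by
  set t := betaDist n β z with ht
  obtain ⟨a, hta⟩ : ∃ a, t = Real.exp (-a) := ⟨-Real.log t, by simp [Real.exp_log h0]⟩
  have hal : l ≤ a := by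
    rw [hta, Real.exp_le_exp] at h1
    linarith
  have hj1 := Nat.floor_le (show 0 ≤ a - l by linarith)
  have hj2 := Nat.lt_floor_add_one (a - l)
  set j := ⌊a - l⌋₊
  refine le_trans ?_ (ENNReal.le_tsum j)
  rw [Set.indicator_of_mem]
  · apply ENNReal.ofReal_le_ofReal
    rw [hta, Real.log_exp, neg_neg]
    have : 0 < l + j := by positivity
    apply one_div_le_one_div_of_le (by positivity)
    apply mul_le_mul
    · apply pow_le_pow_left₀ (Real.exp_pos _).le
      rw [Real.exp_le_exp]; linarith
    · apply pow_le_pow_left₀ this.le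
      linarith
    · positivity
    · positivity
  · show t ≤ _
    rw [hta, Real.exp_le_exp]; linarith

lemma aux_nonneg (n : ℕ) (β : Fin n → ℝ) (z : Fin n → ℝ) : 0 ≤ betaDist n β z := by
  unfold betaDist
  positivity

lemma aux_Fnonneg (n : ℕ) (β : Fin n → ℝ) (x y : Fin n → ℝ) :
    0 ≤ fex n β y / betaDist n β (x - y) ^ ((n:ℝ) - 2) := by
  have h1 := aux_nonneg n β
  apply div_nonneg
  · unfold fex
    apply Set.indicator_nonneg
    intro z _
    have := h1 z
    positivity
  · have := h1 (x - y)
    positivity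

lemma aux_pt (n : ℕ) (hn : 3 ≤ n) (β : Fin n → ℝ) (r : ℝ) (hr : 0 < r) (l : ℝ)
    (hl : l = -Real.log (min r (Real.exp (-3)))) (x y : Fin n → ℝ)
    (hy : betaDist n β (x - y) < r) :
    ‖fex n β y / betaDist n β (x - y) ^ ((n:ℝ) - 2)‖ₑ ≤ HH n β l (x - y) + HH n β l y := by
  have hm : 0 < min r (Real.exp (-3)) := lt_min hr (Real.exp_pos _)
  have hml : Real.exp (-l) = min r (Real.exp (-3)) := by rw [hl, neg_neg, Real.exp_log hm]
  have hl3 : 3 ≤ l := by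
    have : Real.exp (-l) ≤ Real.exp (-3) := hml ▸ min_le_right _ _
    rw [Real.exp_le_exp] at this
    linarith
  rw [Real.enorm_eq_ofReal (aux_Fnonneg n β x y)]
  have hsub : (n:ℝ) - 2 = ((n - 2 : ℕ) : ℝ) := by
    rw [Nat.cast_sub (by omega)]; norm_num
  rw [hsub, Real.rpow_natCast]
  have hnn : ∀ w : ℝ, w ^ n = w ^ 2 * w ^ (n - 2) := fun w => by
    rw [← pow_add]; congr 1; omega
  by_cases htd : betaDist n β y < Real.exp (-3)
  swap
  · simp [fex, htd]
  have hf : fex n β y = 1 / (betaDist n β y ^ 2 * (-Real.log (betaDist n β y)) ^ 6) := by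
    unfold fex
    rw [Set.indicator_of_mem (by exact htd)]
    rw [← Real.rpow_natCast, ← Real.rpow_natCast, abs_of_nonpos]
    · norm_num
    · apply Real.log_nonpos (aux_nonneg n β y)
      refine htd.le.trans ?_
      rw [Real.exp_le_one_iff]; norm_num
  rw [hf]
  rcases (aux_nonneg n β y).eq_or_lt with h0 | ht0
  · simp [← h0]
  rcases (aux_nonneg n β (x - y)).eq_or_lt with h0 | hu0
  · rw [← h0, zero_pow (by omega)]; simp
  have hlogpos : ∀ w, 0 < w → w < Real.exp (-3) → 0 < -Real.log w := by
    intro w hw hw3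
    have := (Real.log_lt_iff_lt_exp hw).mpr hw3
    linarith
  rw [div_div]
  rcases le_or_gt (betaDist n β (x - y)) (betaDist n β y) with hut | htu
  · refine le_trans ?_ ((aux_HHlb n β l (by linarith) (x - y) hu0 ?_).trans le_self_add)
    · apply ENNReal.ofReal_le_ofReal
      have := hlogpos _ hu0 (hut.trans_lt htd)
      apply one_div_le_one_div_of_le (by positivity)
      have h := aux_mono _ _ hu0 hut htd
      calc betaDist n β (x - y) ^ n * (-Real.log (betaDist n β (x - y))) ^ 6
          = betaDist n β (x - y) ^ 2 * (-Real.log (betaDist n β (x - y))) ^ 6 *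
              betaDist n β (x - y) ^ (n - 2) := by
            rw [hnn]
            ring
        _ ≤ _ := mul_le_mul_of_nonneg_right h (by positivity)
    · rw [hml]
      exact le_min hy.le (hut.trans htd.le)
  · refine le_trans ?_ ((aux_HHlb n β l (by linarith) y ht0 ?_).trans le_add_self)
    · apply ENNReal.ofReal_le_ofReal
      have := hlogpos _ ht0 htd
      apply one_div_le_one_div_of_le (by positivity)
      calc betaDist n β y ^ n * (-Real.log (betaDist n β y)) ^ 6
          = betaDist n β y ^ 2 * (-Real.log (betaDist n β y)) ^ 6 *
              betaDist n β y ^ (n - 2) := by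
            rw [hnn]
            ring
        _ ≤ _ := by
            apply mul_le_mul_of_nonneg_left _ (by positivity)
            exact pow_le_pow_left₀ ht0.le htu.le _
    · rw [hml]
      exact le_min (htu.trans hy).le htd.le

lemma aux_main (n : ℕ) (hn : 3 ≤ n) (β : Fin n → ℝ) (hβ : ∀ k, (1:ℝ)/2 ≤ β k)
    (x : Fin n → ℝ) (r : ℝ) (hr : 0 < r) :
    (∫ y in {y : Fin n → ℝ | betaDist n β (x - y) < r},
            fex n β y / betaDist n β (x - y) ^ ((n:ℝ) - 2)) ≤
          (2 ^ n * Real.exp n * 4) * (-Real.log (min r (Real.exp (-3)))) ^ (-5 : ℝ) := by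
  have hm : 0 < min r (Real.exp (-3)) := lt_min hr (Real.exp_pos _)
  obtain ⟨l, hl⟩ : ∃ l, l = -Real.log (min r (Real.exp (-3))) := ⟨_, rfl⟩
  have hl3 : 3 ≤ l := by
    have := Real.log_le_log hm (min_le_right r (Real.exp (-3)))
    rw [Real.log_exp] at this
    linarith
  rw [← hl]
  have hp : l ^ (-5 : ℝ) = 1 / l ^ 5 := by
    rw [Real.rpow_neg (by linarith), one_div]
    norm_cast
  rw [hp]
  have hHbd := aux_HHbound n hn β hβ l (by linarith)
  have hS : MeasurableSet {y : Fin n → ℝ | betaDist n β (x - y) < r} :=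
    measurableSet_lt ((aux_meas n β).comp (measurable_const.sub measurable_id)) measurable_const
  have hmain : ‖∫ y in {y : Fin n → ℝ | betaDist n β (x - y) < r},
            fex n β y / betaDist n β (x - y) ^ ((n:ℝ) - 2)‖ₑ ≤
      ENNReal.ofReal ((2 ^ n * Real.exp n * 4) * (1 / l ^ 5)) := by
    calc _ ≤ ∫⁻ y in {y : Fin n → ℝ | betaDist n β (x - y) < r},
            ‖fex n β y / betaDist n β (x - y) ^ ((n:ℝ) - 2)‖ₑ :=
          enorm_integral_le_lintegral_enorm _
      _ ≤ ∫⁻ y in {y : Fin n → ℝ | betaDist n β (x - y) < r},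
            (HH n β l (x - y) + HH n β l y) :=
          setLIntegral_mono' hS (fun y hy => aux_pt n hn β r hr l hl x y hy)
      _ ≤ ∫⁻ y, (HH n β l (x - y) + HH n β l y) := setLIntegral_le_lintegral _ _
      _ = (∫⁻ y, HH n β l y) + ∫⁻ y, HH n β l y := by
          rw [lintegral_add_right _ (aux_HHmeas n β l), lintegral_sub_left_eq_self]
      _ ≤ _ := by
          refine (add_le_add hHbd hHbd).trans ?_
          rw [← ENNReal.ofReal_add (by positivity) (by positivity)]
          apply ENNReal.ofReal_le_ofReal
          apply le_of_eq
          ring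
  rw [Real.enorm_eq_ofReal (integral_nonneg (fun y => aux_Fnonneg n β x y))] at hmain
  exact (ENNReal.ofReal_le_ofReal_iff (by positivity)).mp hmain

/-- the Stummel-kernel integrals of the example function are bounded by
`C (-log min(r, e⁻³))⁻⁵`; in particular the Stummel modulus `η_β(r) → 0` as `r → 0⁺`. -/
theorem example_function_stummel_bound
    (n : ℕ) (hn : 3 ≤ n) (β : Fin n → ℝ) (hβ : ∀ k, (1:ℝ)/2 ≤ β k) :
    (∃ C > 0, ∀ x : Fin n → ℝ, ∀ r > 0,
        (∫ y in {y : Fin n → ℝ | betaDist n β (x - y) < r},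
            fex n β y / betaDist n β (x - y) ^ ((n:ℝ) - 2)) ≤
          C * (-Real.log (min r (Real.exp (-3)))) ^ (-5 : ℝ)) ∧
    Tendsto (etaEx n β) (𝓝[>] (0:ℝ)) (𝓝 0) := by
  refine ⟨⟨2 ^ n * Real.exp n * 4, by positivity, fun x r hr => aux_main n hn β hβ x r hr⟩, ?_⟩
  have hlim : Tendsto (fun r : ℝ => (2 ^ n * Real.exp n * 4) * (-Real.log r) ^ (-5 : ℝ))
      (𝓝[>] (0:ℝ)) (𝓝 0) := by
    have h1 : Tendsto (fun r : ℝ => -Real.log r) (𝓝[>] (0:ℝ)) atTop :=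
      tendsto_neg_atBot_atTop.comp Real.tendsto_log_nhdsGT_zero
    have h2 := ((tendsto_rpow_neg_atTop (show (0:ℝ) < 5 by norm_num)).comp h1).const_mul
      (2 ^ n * Real.exp n * 4)
    simpa using h2
  refine tendsto_of_tendsto_of_tendsto_of_le_of_le' tendsto_const_nhds hlim ?_ ?_
  · exact Eventually.of_forall fun r => Real.iSup_nonneg fun x =>
      integral_nonneg (fun y => aux_Fnonneg n β x y)
  · have hev : ∀ᶠ r in 𝓝[>] (0:ℝ), r < Real.exp (-3) :=
      nhdsWithin_le_nhds (gt_mem_nhds (Real.exp_pos _))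
    filter_upwards [hev, self_mem_nhdsWithin] with r hr1 hr0
    apply ciSup_le
    intro x
    have := aux_main n hn β hβ x r hr0
    rwa [min_eq_left hr1.le] at this
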